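/- For every β ∈ (0, 1/2) there exist constants C' > 0 and t₀ ∈ (0, 1] such that for all t ∈ (0, t₀], ν_t({x ∈ ℝ : t^β/2 < |x| ≤ 2 t^β}) ≤ C' · t^{1 − αβ}. (This is the probability bound for increments of the small-jump component lying near the threshold, used in Lemma 4.9 of the paper.) -/

import Mathlib

open MeasureTheory

/-!
Let `φ` be the characteristic function of `ν_t`, `ψ` its Lévy exponent and
`G u = ∫ min ((u x) ^ 2) 1 ∂μ`. The truncation inequality bounds `ν_t {|x| > r}` by twice the
supremum of `1 - Re φ u` over `|u| ≤ 2 / r`, and `1 - Re φ ≤ -t Re ψ + (t Im ψ) ^ 2 / 2`. The real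
part satisfies `-Re ψ u ≤ 2 G u`. For the imaginary part, `|sin y - y| ≤ 2 |y| √(min (y ^ 2) 1)`
and Cauchy–Schwarz give `(Im ψ u) ^ 2 ≤ 4 u ^ 2 (∫ x ^ 2 ∂μ) (G u)`, so that the compensator costs
only a factor `1 + t u ^ 2 ∫ x ^ 2 ∂μ`. At `|u| ≲ t ^ (-β)` this factor is bounded precisely because
`β ≤ 1 / 2`. Finally `G u ≲ ρ ^ (-α)` for `|u| ≤ 1 / ρ`, by the layer-cake formula for
`(max (x ^ 2) (ρ ^ 2))⁻¹` under the finite measure `x ^ 2 ∂μ`: the superlevel sets of this function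
are contained in balls around `0`, where the hypothesis on `μ` applies.
-/

lemma abs_sin_sub_self_le_mul_sqrt_min (y : ℝ) :
    |Real.sin y - y| ≤ |y| * (2 * √(min (y ^ 2) 1)) := by
  rcases le_total |y| 1 with hy | hy
  · have hsq : y ^ 2 ≤ 1 := sq_le_one_iff_abs_le_one y |>.mpr hy
    rw [min_eq_left hsq, Real.sqrt_sq_eq_abs, abs_sub_comm]
    calc |y - Real.sin y| ≤ |y| ^ 3 / 6 := Real.abs_sub_sin_le y
      _ ≤ |y| * (2 * |y|) := by nlinarith [mul_le_mul_of_nonneg_left hy (sq_nonneg |y|)]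
  · have hsq : 1 ≤ y ^ 2 := one_le_sq_iff_one_le_abs y |>.mpr hy
    rw [min_eq_right hsq, Real.sqrt_one]
    linarith [abs_sub (Real.sin y) y, Real.abs_sin_le_abs (x := y)]

lemma one_sub_cos_le_two_mul_min (y : ℝ) : 1 - Real.cos y ≤ 2 * min (y ^ 2) 1 := by
  rw [mul_min_of_nonneg _ _ two_pos.le, le_min_iff]
  constructor
  · linarith [Real.one_sub_sq_div_two_le_cos (x := y), sq_nonneg y]
  · linarith [Real.neg_one_le_cos y]

lemma one_sub_re_exp_le {z : ℂ} (hz : z.re ≤ 0) :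
    1 - (Complex.exp z).re ≤ -z.re + z.im ^ 2 / 2 := by
  have hexp : Real.exp z.re ≤ 1 := Real.exp_le_one_iff.mpr hz
  rw [Complex.exp_re]
  calc 1 - Real.exp z.re * Real.cos z.im
      = (1 - Real.exp z.re) + Real.exp z.re * (1 - Real.cos z.im) := by ring
    _ ≤ (1 - Real.exp z.re) + (1 - Real.cos z.im) := by
        gcongr
        exact mul_le_of_le_one_left (sub_nonneg.mpr (Real.cos_le_one _)) hexp
    _ ≤ -z.re + z.im ^ 2 / 2 := by
        linarith [Real.add_one_le_exp z.re, Real.one_sub_sq_div_two_le_cos (x := z.im)]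

lemma sq_integral_mul_le {X : Type*} [MeasurableSpace X] {μ : Measure X} {f g : X → ℝ}
    (hf : MemLp f 2 μ) (hg : MemLp g 2 μ) :
    (∫ x, f x * g x ∂μ) ^ 2 ≤ (∫ x, f x ^ 2 ∂μ) * ∫ x, g x ^ 2 ∂μ := by
  have inner_toLp {f g : X → ℝ} (hf : MemLp f 2 μ) (hg : MemLp g 2 μ) :
      inner ℝ (hf.toLp f) (hg.toLp g) = ∫ x, f x * g x ∂μ := by
    refine integral_congr_ae ?_
    filter_upwards [hf.coeFn_toLp, hg.coeFn_toLp] with x hfx hgx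
    simp [hfx, hgx, mul_comm]
  have h := real_inner_mul_inner_self_le (hf.toLp f) (hg.toLp g)
  simpa only [inner_toLp, ← sq] using h

lemma intervalIntegral_eq_ofReal_of_apply_neg_eq_conj {f : ℝ → ℂ} {R : ℝ}
    (hf : IntervalIntegrable f volume (-R) R) (hconj : ∀ u, f (-u) = starRingEnd ℂ (f u)) :
    ∫ u in -R..R, f u = ((∫ u in -R..R, (f u).re : ℝ) : ℂ) := by
  have hself : starRingEnd ℂ (∫ u in -R..R, f u) = ∫ u in -R..R, f u := by
    rw [← intervalIntegral.intervalIntegral_conj]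
    simpa only [hconj, neg_neg] using intervalIntegral.integral_comp_neg (a := -R) (b := R) f
  rw [← Complex.conj_eq_iff_re.mp hself]
  exact congrArg _ (Complex.reCLM.intervalIntegral_comp_comm hf).symm

lemma measureReal_abs_gt_le_of_one_sub_re_charFun_le {ν : Measure ℝ} [IsProbabilityMeasure ν]
    {r B : ℝ} (hr : 0 < r) (hB : ∀ u : ℝ, |u| ≤ 2 * r⁻¹ → 1 - (charFun ν u).re ≤ B) :
    ν.real {x | r < |x|} ≤ 2 * B := by
  set R := 2 * r⁻¹ with hR
  have hR0 : 0 < R := by positivity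
  have hreal : ∫ u in -R..R, 1 - charFun ν u =
      ((∫ u in -R..R, (1 - charFun ν u).re : ℝ) : ℂ) :=
    intervalIntegral_eq_ofReal_of_apply_neg_eq_conj
      ((by fun_prop : Continuous fun u ↦ 1 - charFun ν u).intervalIntegrable _ _)
      fun u ↦ by simp [charFun_neg]
  have hbound : ‖∫ u in -R..R, (1 - charFun ν u).re‖ ≤ B * |R - -R| := by
    refine intervalIntegral.norm_integral_le_of_norm_le_const fun u hu ↦ ?_
    rw [Set.uIoc_of_le (by linarith)] at hu
    have hre : (charFun ν u).re ≤ 1 := (Complex.re_le_norm _).trans (norm_charFun_le_one u)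
    rw [Real.norm_of_nonneg (by simpa using hre), Complex.sub_re, Complex.one_re]
    exact hB u (abs_le.mpr ⟨hu.1.le, hu.2⟩)
  calc ν.real {x | r < |x|} ≤ 2⁻¹ * r * ‖∫ u in -R..R, 1 - charFun ν u‖ := by
        simpa only [hR, neg_mul] using measureReal_abs_gt_le_integral_charFun (μ := ν) hr
    _ ≤ 2⁻¹ * r * (B * |R - -R|) := by
        rw [hreal, Complex.norm_real]
        gcongr
    _ = 2 * B := by
        rw [sub_neg_eq_add, abs_of_pos (by positivity), hR]
        field_simp
        ring

lemma min_sq_mul_le_sq_mul_inv_max {u x ρ : ℝ} (hρ : 0 < ρ) (hu : |u| ≤ ρ⁻¹) :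
    min ((u * x) ^ 2) 1 ≤ x ^ 2 * (max (x ^ 2) (ρ ^ 2))⁻¹ := by
  have husq : u ^ 2 * ρ ^ 2 ≤ 1 := by
    rw [← mul_pow, sq_le_one_iff_abs_le_one, abs_mul, abs_of_pos hρ]
    simpa only [inv_mul_cancel₀ hρ.ne'] using mul_le_mul_of_nonneg_right hu hρ.le
  rw [← div_eq_mul_inv, le_div_iff₀ (by positivity)]
  rcases le_total (x ^ 2) (ρ ^ 2) with h | h
  · rw [max_eq_right h]
    calc min ((u * x) ^ 2) 1 * ρ ^ 2 ≤ (u * x) ^ 2 * ρ ^ 2 := by gcongr; exact min_le_left _ _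
      _ = x ^ 2 * (u ^ 2 * ρ ^ 2) := by ring
      _ ≤ x ^ 2 := mul_le_of_le_one_right (sq_nonneg x) husq
  · rw [max_eq_left h]
    exact mul_le_of_le_one_left (sq_nonneg x) (min_le_right _ _)

lemma measureReal_le_inv_max_sq_norm_le {E : Type*} [NormedAddCommGroup E] [MeasurableSpace E]
    {κ : Measure E} [IsFiniteMeasure κ] {α K ρ y : ℝ}
    (hκ : ∀ s > 0, κ.real (Metric.closedBall 0 s) ≤ K * s ^ (2 - α)) (hρ : 0 < ρ) (hy : 0 < y) :
    κ.real {x | y ≤ (max (‖x‖ ^ 2) (ρ ^ 2))⁻¹} ≤ K * y ^ (α / 2 - 1) := by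
  have hsub : {x : E | y ≤ (max (‖x‖ ^ 2) (ρ ^ 2))⁻¹} ⊆
      Metric.closedBall 0 (y ^ (-1 / 2 : ℝ)) := by
    intro x hx
    have hmax : max (‖x‖ ^ 2) (ρ ^ 2) ≤ y⁻¹ := (le_inv_comm₀ hy (by positivity)).mp hx
    rw [mem_closedBall_zero_iff, neg_div, Real.rpow_neg hy.le, ← Real.inv_rpow hy.le,
      ← Real.sqrt_eq_rpow]
    exact Real.le_sqrt_of_sq_le ((le_max_left _ _).trans hmax)
  calc κ.real {x | y ≤ (max (‖x‖ ^ 2) (ρ ^ 2))⁻¹}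
      ≤ κ.real (Metric.closedBall 0 (y ^ (-1 / 2 : ℝ))) := measureReal_mono hsub
    _ ≤ K * (y ^ (-1 / 2 : ℝ)) ^ (2 - α) := hκ _ (by positivity)
    _ = K * y ^ (α / 2 - 1) := by
        rw [← Real.rpow_mul hy.le]
        ring_nf

lemma integral_inv_max_sq_norm_le {E : Type*} [NormedAddCommGroup E] [MeasurableSpace E]
    [OpensMeasurableSpace E] {κ : Measure E} [IsFiniteMeasure κ] {α K ρ : ℝ} (hα : 0 < α)
    (hκ : ∀ s > 0, κ.real (Metric.closedBall 0 s) ≤ K * s ^ (2 - α)) (hρ : 0 < ρ) :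
    ∫ x, (max (‖x‖ ^ 2) (ρ ^ 2))⁻¹ ∂κ ≤ 2 * K / α * ρ ^ (-α) := by
  have hbdd (x : E) : (max (‖x‖ ^ 2) (ρ ^ 2))⁻¹ ≤ (ρ ^ 2)⁻¹ := by
    gcongr
    exact le_max_right _ _
  have hnonneg (x : E) : 0 ≤ (max (‖x‖ ^ 2) (ρ ^ 2))⁻¹ := by positivity
  have hint : Integrable (fun x : E ↦ (max (‖x‖ ^ 2) (ρ ^ 2))⁻¹) κ :=
    .of_bound (by fun_prop) _ (.of_forall fun x ↦
      (Real.norm_of_nonneg (hnonneg x)).trans_le (hbdd x))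
  have hrpow : IntervalIntegrable (fun y : ℝ ↦ K * y ^ (α / 2 - 1)) volume 0 (ρ ^ 2)⁻¹ :=
    (intervalIntegral.intervalIntegrable_rpow' (by linarith)).const_mul K
  calc ∫ x, (max (‖x‖ ^ 2) (ρ ^ 2))⁻¹ ∂κ
      = ∫ y in Set.Ioc 0 (ρ ^ 2)⁻¹, κ.real {x | y ≤ (max (‖x‖ ^ 2) (ρ ^ 2))⁻¹} :=
        hint.integral_eq_integral_Ioc_meas_le (.of_forall hnonneg) (.of_forall hbdd)
    _ ≤ ∫ y in Set.Ioc 0 (ρ ^ 2)⁻¹, K * y ^ (α / 2 - 1) := by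
        refine integral_mono_of_nonneg (.of_forall fun _ ↦ measureReal_nonneg) ?_ ?_
        · exact (intervalIntegrable_iff_integrableOn_Ioc_of_le (by positivity)).mp hrpow
        · exact (ae_restrict_mem measurableSet_Ioc).mono fun y hy ↦
            measureReal_le_inv_max_sq_norm_le hκ hρ hy.1
    _ = K * (((ρ ^ 2)⁻¹) ^ (α / 2) / (α / 2)) := by
        rw [← intervalIntegral.integral_of_le (by positivity), intervalIntegral.integral_const_mul,
          integral_rpow (.inl (by linarith)), sub_add_cancel, Real.zero_rpow (by positivity),
          sub_zero]
    _ = 2 * K / α * ρ ^ (-α) := by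
        rw [← Real.rpow_natCast, ← Real.rpow_neg hρ.le, ← Real.rpow_mul hρ.le]
        field_simp
        norm_num

/-- The measure `x ^ 2 ∂μ`. It is finite when `μ` has a second moment, although `μ` itself may be
infinite near `0`. -/
noncomputable def secondMomentMeasure (μ : Measure ℝ) : Measure ℝ :=
  μ.withDensity fun x ↦ ENNReal.ofReal (x ^ 2)

lemma isFiniteMeasure_secondMomentMeasure {μ : Measure ℝ}
    (hμ : Integrable (fun x : ℝ ↦ x ^ 2) μ) :
    IsFiniteMeasure (secondMomentMeasure μ) :=
  isFiniteMeasure_withDensity_ofReal hμ.2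

lemma integral_secondMomentMeasure (μ : Measure ℝ) (f : ℝ → ℝ) :
    ∫ x, f x ∂secondMomentMeasure μ = ∫ x, x ^ 2 * f x ∂μ := by
  rw [secondMomentMeasure, integral_withDensity_eq_integral_toReal_smul (by fun_prop) (by simp)]
  simp [ENNReal.toReal_ofReal, sq_nonneg]

lemma secondMomentMeasure_real_apply {μ : Measure ℝ} {s : Set ℝ} (hs : MeasurableSet s) :
    (secondMomentMeasure μ).real s = ∫ x in s, x ^ 2 ∂μ := by
  rw [← integral_indicator_one hs, integral_secondMomentMeasure, ← integral_indicator hs]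
  congr with x
  by_cases hx : x ∈ s <;> simp [hx]

/-- The Lévy–Khintchine exponent of the pure-jump Lévy martingale with Lévy measure `μ`, whose
time-`t` law has characteristic function `exp (t * levyExponent μ u)`. Every jump is compensated,
without a truncation function, so it is meaningful only if `∫ x ^ 2 ∂μ` is finite. -/
noncomputable def levyExponent (μ : Measure ℝ) (u : ℝ) : ℂ :=
  ∫ x : ℝ, (Complex.exp (Complex.I * (u : ℂ) * (x : ℂ)) - 1 - Complex.I * (u : ℂ) * (x : ℂ)) ∂μ

section SquareIntegrable

variable {μ : Measure ℝ} (hμ : Integrable (fun x : ℝ ↦ x ^ 2) μ)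
include hμ

lemma integrable_sq_mul (u : ℝ) : Integrable (fun x : ℝ ↦ (u * x) ^ 2) μ := by
  simpa only [mul_pow] using hμ.const_mul (u ^ 2)

lemma integrable_min_sq_mul (u : ℝ) : Integrable (fun x : ℝ ↦ min ((u * x) ^ 2) 1) μ :=
  (integrable_sq_mul hμ u).mono' (by fun_prop) (.of_forall fun x ↦ by
    rw [Real.norm_of_nonneg (by positivity)]
    exact min_le_left _ _)

lemma integrable_cos_sub_one (u : ℝ) : Integrable (fun x : ℝ ↦ Real.cos (u * x) - 1) μ := by
  refine ((integrable_min_sq_mul hμ u).const_mul 2).mono' (by fun_prop) (.of_forall fun x ↦ ?_)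
  rw [Real.norm_eq_abs, abs_sub_comm, abs_of_nonneg (sub_nonneg.mpr (Real.cos_le_one _))]
  exact one_sub_cos_le_two_mul_min _

lemma memLp_two_mul_sqrt_min (u : ℝ) :
    MemLp (fun x : ℝ ↦ 2 * √(min ((u * x) ^ 2) 1)) 2 μ := by
  refine MemLp.const_mul ((memLp_two_iff_integrable_sq (by fun_prop)).mpr ?_) 2
  simpa only [Real.sq_sqrt (le_min (sq_nonneg _) zero_le_one)] using integrable_min_sq_mul hμ u

lemma memLp_two_abs_mul (u : ℝ) : MemLp (fun x : ℝ ↦ |u * x|) 2 μ := by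
  rw [memLp_two_iff_integrable_sq (by fun_prop)]
  simpa only [sq_abs] using integrable_sq_mul hμ u

lemma integrable_sin_sub_self (u : ℝ) :
    Integrable (fun x : ℝ ↦ Real.sin (u * x) - u * x) μ := by
  refine ((memLp_two_abs_mul hμ u).integrable_mul (memLp_two_mul_sqrt_min hμ u)).mono'
    (by fun_prop) (.of_forall fun x ↦ ?_)
  exact abs_sin_sub_self_le_mul_sqrt_min (u * x)

lemma levyExponent_eq (u : ℝ) : levyExponent μ u =
    (∫ x, (Real.cos (u * x) - 1) ∂μ : ℝ) +
      (∫ x, (Real.sin (u * x) - u * x) ∂μ : ℝ) * Complex.I := by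
  rw [← integral_complex_ofReal, ← integral_complex_ofReal, ← integral_mul_const, ← integral_add
    (integrable_cos_sub_one hμ u).ofReal ((integrable_sin_sub_self hμ u).ofReal.mul_const _)]
  refine integral_congr_ae (.of_forall fun x ↦ ?_)
  have hexp : Complex.I * u * x = (u * x : ℝ) * Complex.I := by push_cast; ring
  simp only [hexp, Complex.exp_mul_I]
  push_cast
  ring

lemma re_levyExponent (u : ℝ) : (levyExponent μ u).re = ∫ x, (Real.cos (u * x) - 1) ∂μ := by
  simp [levyExponent_eq hμ]

lemma im_levyExponent (u : ℝ) :
    (levyExponent μ u).im = ∫ x, (Real.sin (u * x) - u * x) ∂μ := by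
  simp [levyExponent_eq hμ]

lemma re_levyExponent_nonpos (u : ℝ) : (levyExponent μ u).re ≤ 0 := by
  rw [re_levyExponent hμ]
  exact integral_nonpos fun x ↦ sub_nonpos.mpr (Real.cos_le_one _)

lemma neg_re_levyExponent_le (u : ℝ) :
    -(levyExponent μ u).re ≤ 2 * ∫ x, min ((u * x) ^ 2) 1 ∂μ := by
  rw [re_levyExponent hμ, ← integral_neg, ← integral_const_mul]
  refine integral_mono (integrable_cos_sub_one hμ u).neg
    ((integrable_min_sq_mul hμ u).const_mul 2) fun x ↦ ?_
  simpa using one_sub_cos_le_two_mul_min (u * x)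

lemma sq_im_levyExponent_le (u : ℝ) : (levyExponent μ u).im ^ 2 ≤
    4 * u ^ 2 * (∫ x, x ^ 2 ∂μ) * ∫ x, min ((u * x) ^ 2) 1 ∂μ := by
  have hle : |(levyExponent μ u).im| ≤ ∫ x, |u * x| * (2 * √(min ((u * x) ^ 2) 1)) ∂μ := by
    have hint : Integrable (fun x : ℝ ↦ |u * x| * (2 * √(min ((u * x) ^ 2) 1))) μ :=
      (memLp_two_abs_mul hμ u).integrable_mul (memLp_two_mul_sqrt_min hμ u)
    rw [im_levyExponent hμ, ← Real.norm_eq_abs]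
    exact norm_integral_le_of_norm_le hint
      (.of_forall fun x ↦ abs_sin_sub_self_le_mul_sqrt_min (u * x))
  calc (levyExponent μ u).im ^ 2
      ≤ (∫ x, |u * x| * (2 * √(min ((u * x) ^ 2) 1)) ∂μ) ^ 2 :=
        sq_le_sq' (neg_le_of_abs_le hle) (le_of_abs_le hle)
    _ ≤ (∫ x, |u * x| ^ 2 ∂μ) * ∫ x, (2 * √(min ((u * x) ^ 2) 1)) ^ 2 ∂μ :=
        sq_integral_mul_le (memLp_two_abs_mul hμ u) (memLp_two_mul_sqrt_min hμ u)
    _ = 4 * u ^ 2 * (∫ x, x ^ 2 ∂μ) * ∫ x, min ((u * x) ^ 2) 1 ∂μ := by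
        have hfst : ∫ x, |u * x| ^ 2 ∂μ = u ^ 2 * ∫ x, x ^ 2 ∂μ := by
          simp only [sq_abs, mul_pow, integral_const_mul]
        have hsnd (x : ℝ) : (2 * √(min ((u * x) ^ 2) 1)) ^ 2 = 4 * min ((u * x) ^ 2) 1 := by
          rw [mul_pow, Real.sq_sqrt (by positivity)]
          norm_num
        simp only [hfst, hsnd, integral_const_mul]
        ring

lemma one_sub_re_exp_mul_levyExponent_le {t : ℝ} (ht : 0 ≤ t) (u : ℝ) :
    1 - (Complex.exp (t * levyExponent μ u)).re ≤
      2 * t * (1 + t * u ^ 2 * ∫ x, x ^ 2 ∂μ) * ∫ x, min ((u * x) ^ 2) 1 ∂μ := by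
  have hre := neg_re_levyExponent_le hμ u
  have him := sq_im_levyExponent_le hμ u
  calc 1 - (Complex.exp (t * levyExponent μ u)).re
      ≤ t * -(levyExponent μ u).re + t ^ 2 * (levyExponent μ u).im ^ 2 / 2 := by
        convert one_sub_re_exp_le (z := t * levyExponent μ u) ?_ using 1
        · simp only [Complex.re_ofReal_mul, Complex.im_ofReal_mul]
          ring
        · rw [Complex.re_ofReal_mul]
          exact mul_nonpos_of_nonneg_of_nonpos ht (re_levyExponent_nonpos hμ u)
    _ ≤ t * (2 * ∫ x, min ((u * x) ^ 2) 1 ∂μ) +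
          t ^ 2 * (4 * u ^ 2 * (∫ x, x ^ 2 ∂μ) * ∫ x, min ((u * x) ^ 2) 1 ∂μ) / 2 := by gcongr
    _ = _ := by ring

lemma integral_min_sq_mul_le {α K ρ u : ℝ} (hα : 0 < α)
    (hK : ∀ s > 0, ∫ x in Set.Icc (-s) s, x ^ 2 ∂μ ≤ K * s ^ (2 - α))
    (hρ : 0 < ρ) (hu : |u| ≤ ρ⁻¹) :
    ∫ x, min ((u * x) ^ 2) 1 ∂μ ≤ 2 * K / α * ρ ^ (-α) := by
  have := isFiniteMeasure_secondMomentMeasure hμ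
  have hball (s : ℝ) (hs : 0 < s) :
      (secondMomentMeasure μ).real (Metric.closedBall 0 s) ≤ K * s ^ (2 - α) := by
    rw [secondMomentMeasure_real_apply Metric.isClosed_closedBall.measurableSet,
      Real.closedBall_eq_Icc, zero_sub, zero_add]
    exact hK s hs
  have hint : Integrable (fun x : ℝ ↦ x ^ 2 * (max (x ^ 2) (ρ ^ 2))⁻¹) μ := by
    refine (hμ.mul_const (ρ ^ 2)⁻¹).mono' (by fun_prop) (.of_forall fun x ↦ ?_)
    rw [Real.norm_of_nonneg (by positivity)]
    gcongr
    exact le_max_right _ _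
  calc ∫ x, min ((u * x) ^ 2) 1 ∂μ ≤ ∫ x, x ^ 2 * (max (x ^ 2) (ρ ^ 2))⁻¹ ∂μ :=
        integral_mono (integrable_min_sq_mul hμ u) hint fun x ↦ min_sq_mul_le_sq_mul_inv_max hρ hu
    _ = ∫ x, (max (‖x‖ ^ 2) (ρ ^ 2))⁻¹ ∂secondMomentMeasure μ := by
        simp only [integral_secondMomentMeasure, Real.norm_eq_abs, sq_abs]
    _ ≤ 2 * K / α * ρ ^ (-α) := integral_inv_max_sq_norm_le hα hball hρ

lemma measureReal_abs_gt_le_of_charFun_eq_exp_levyExponent {ν : Measure ℝ}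
    [IsProbabilityMeasure ν] {t : ℝ} (ht : 0 ≤ t)
    (hν : ∀ u, charFun ν u = Complex.exp (t * levyExponent μ u)) {α K r : ℝ} (hα : 0 < α)
    (hK : ∀ s > 0, ∫ x in Set.Icc (-s) s, x ^ 2 ∂μ ≤ K * s ^ (2 - α)) (hr : 0 < r) :
    ν.real {x | r < |x|} ≤
      8 * K / α * (1 + 4 * t / r ^ 2 * ∫ x, x ^ 2 ∂μ) * (t * (r / 2) ^ (-α)) := by
  have hG (u : ℝ) (hu : |u| ≤ 2 * r⁻¹) : 1 - (charFun ν u).re ≤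
      2 * t * (1 + t * (2 * r⁻¹) ^ 2 * ∫ x, x ^ 2 ∂μ) * (2 * K / α * (r / 2) ^ (-α)) := by
    have husq : u ^ 2 ≤ (2 * r⁻¹) ^ 2 := sq_le_sq' (neg_le_of_abs_le hu) (le_of_abs_le hu)
    rw [hν]
    refine (one_sub_re_exp_mul_levyExponent_le hμ ht u).trans ?_
    gcongr
    exact integral_min_sq_mul_le hμ hα hK (half_pos hr) (by rwa [inv_div, div_eq_mul_inv])
  refine (measureReal_abs_gt_le_of_one_sub_re_charFun_le hr hG).trans_eq ?_
  ring

lemma measureReal_abs_gt_half_le_of_charFun_eq_exp_levyExponent {ν : Measure ℝ}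
    [IsProbabilityMeasure ν] {t : ℝ} (ht : 0 ≤ t)
    (hν : ∀ u, charFun ν u = Complex.exp (t * levyExponent μ u)) {α K r : ℝ} (hα : 0 < α)
    (hK₀ : 0 ≤ K) (hK : ∀ s > 0, ∫ x in Set.Icc (-s) s, x ^ 2 ∂μ ≤ K * s ^ (2 - α))
    (hr : 0 < r) (htr : t ≤ r ^ 2) :
    ν.real {x | r / 2 < |x|} ≤
      8 * K / α * (1 + 16 * ∫ x, x ^ 2 ∂μ) * 4 ^ α * (t * r ^ (-α)) := by
  have hscale : 4 * t / (r / 2) ^ 2 ≤ 16 := by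
    rw [div_le_iff₀ (by positivity)]
    linarith
  have hpow : (r / 2 / 2) ^ (-α) = 4 ^ α * r ^ (-α) := by
    rw [div_div, Real.div_rpow hr.le (by norm_num), Real.rpow_neg (by norm_num : (0 : ℝ) ≤ 2 * 2),
      div_inv_eq_mul, mul_comm]
    norm_num
  calc ν.real {x | r / 2 < |x|}
      ≤ 8 * K / α * (1 + 4 * t / (r / 2) ^ 2 * ∫ x, x ^ 2 ∂μ) * (t * (r / 2 / 2) ^ (-α)) :=
        measureReal_abs_gt_le_of_charFun_eq_exp_levyExponent hμ ht hν hα hK (half_pos hr)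
    _ ≤ 8 * K / α * (1 + 16 * ∫ x, x ^ 2 ∂μ) * (t * (r / 2 / 2) ^ (-α)) := by gcongr
    _ = 8 * K / α * (1 + 16 * ∫ x, x ^ 2 ∂μ) * 4 ^ α * (t * r ^ (-α)) := by
        rw [hpow]
        ring

lemma exists_pos_forall_integral_Icc_sq_le {α C : ℝ} (hα : α ≤ 2)
    (hC : ∀ s ∈ Set.Ioc (0 : ℝ) 1, ∫ x in Set.Icc (-s) s, x ^ 2 ∂μ ≤ C * s ^ (2 - α)) :
    ∃ K > 0, ∀ s > 0, ∫ x in Set.Icc (-s) s, x ^ 2 ∂μ ≤ K * s ^ (2 - α) := by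
  refine ⟨max C (∫ x, x ^ 2 ∂μ + 1), lt_max_of_lt_right (by positivity), fun s hs ↦ ?_⟩
  rcases le_total s 1 with hs1 | hs1
  · refine (hC s ⟨hs, hs1⟩).trans ?_
    gcongr
    exact le_max_left _ _
  · calc ∫ x in Set.Icc (-s) s, x ^ 2 ∂μ ≤ ∫ x, x ^ 2 ∂μ :=
          setIntegral_le_integral hμ (.of_forall fun x ↦ sq_nonneg x)
      _ ≤ max C (∫ x, x ^ 2 ∂μ + 1) := le_max_of_le_right (le_add_of_nonneg_right zero_le_one)
      _ ≤ max C (∫ x, x ^ 2 ∂μ + 1) * s ^ (2 - α) :=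
          le_mul_of_one_le_right (le_max_of_le_right (by positivity))
            (Real.one_le_rpow hs1 (sub_nonneg.mpr hα))

end SquareIntegrable

lemma charFun_eq_integral_exp (ν : Measure ℝ) (u : ℝ) :
    charFun ν u = ∫ x : ℝ, Complex.exp (Complex.I * u * x) ∂ν := by
  simp only [charFun_apply_real, mul_comm Complex.I, mul_right_comm]

theorem near_threshold_probability_bound_general
    (μ : Measure ℝ) (hμ_mom : Integrable (fun x : ℝ => x ^ 2) μ)
    (α C : ℝ) (hα : α ∈ Set.Ioc (0 : ℝ) 2)
    (hμ_small : ∀ v ∈ Set.Ioc (0 : ℝ) 1,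
      ∫ x in Set.Icc (-v) v, x ^ 2 ∂μ ≤ C * v ^ (2 - α))
    (ν : ℝ → Measure ℝ)
    (hν_prob : ∀ t : ℝ, 0 < t → IsProbabilityMeasure (ν t))
    (hν_char : ∀ t : ℝ, 0 < t → ∀ u : ℝ,
      ∫ x : ℝ, Complex.exp (Complex.I * (u : ℂ) * (x : ℂ)) ∂(ν t) =
        Complex.exp ((t : ℂ) *
          ∫ x : ℝ, (Complex.exp (Complex.I * (u : ℂ) * (x : ℂ)) - 1
            - Complex.I * (u : ℂ) * (x : ℂ)) ∂μ))
    (β : ℝ) (hβ : β ≤ 1 / 2) :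
    ∃ C' > (0 : ℝ), ∀ t ∈ Set.Ioc (0 : ℝ) 1,
      ν t {x : ℝ | t ^ β / 2 < |x|} ≤ ENNReal.ofReal (C' * t ^ (1 - α * β)) := by
  obtain ⟨K, hK, hμK⟩ := exists_pos_forall_integral_Icc_sq_le hμ_mom hα.2 hμ_small
  have hα₀ := hα.1
  refine ⟨8 * K / α * (1 + 16 * ∫ x, x ^ 2 ∂μ) * 4 ^ α, by positivity, fun t ht ↦ ?_⟩
  have ht₀ := ht.1
  have := hν_prob t ht₀
  have hν (u : ℝ) : charFun (ν t) u = Complex.exp (t * levyExponent μ u) := by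
    rw [charFun_eq_integral_exp, hν_char t ht₀, levyExponent]
  have hsq : t ≤ (t ^ β) ^ 2 := by
    rw [← Real.rpow_mul_natCast ht₀.le]
    exact Real.self_le_rpow_of_le_one ht₀.le ht.2 (by push_cast; linarith)
  have hpow : t * (t ^ β) ^ (-α) = t ^ (1 - α * β) := by
    rw [sub_eq_add_neg, Real.rpow_add ht₀, Real.rpow_one, ← Real.rpow_mul ht₀.le, mul_neg,
      mul_comm α]
  rw [← ofReal_measureReal, ← hpow]
  exact ENNReal.ofReal_le_ofReal (measureReal_abs_gt_half_le_of_charFun_eq_exp_levyExponent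
    hμ_mom ht₀.le hν hα₀ hK.le hμK (by positivity) hsq)

/-- Probability bound for increments of the small-jump component lying near the
threshold (used in Lemma 4.9): for every `β ∈ (0, 1/2)` there are `C' > 0` and
`t₀ ∈ (0,1]` such that `ν_t({t^β/2 < |x| ≤ 2 t^β}) ≤ C' · t^{1 - αβ}` for all
`t ∈ (0, t₀]`. -/
theorem near_threshold_probability_bound
    (μ : Measure ℝ)
    (hμ_supp : μ (Set.Icc (-1 : ℝ) 1)ᶜ = 0)
    (hμ_mom : Integrable (fun x : ℝ => x ^ 2) μ)
    (α C : ℝ) (hα : α ∈ Set.Ioo (0 : ℝ) 2) (hC : 0 < C)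
    (hμ_small : ∀ v ∈ Set.Ioc (0 : ℝ) 1,
      ∫ x in Set.Icc (-v) v, x ^ 2 ∂μ ≤ C * v ^ (2 - α))
    (ν : ℝ → Measure ℝ)
    (hν_prob : ∀ t : ℝ, 0 < t → IsProbabilityMeasure (ν t))
    (hν_char : ∀ t : ℝ, 0 < t → ∀ u : ℝ,
      ∫ x : ℝ, Complex.exp (Complex.I * (u : ℂ) * (x : ℂ)) ∂(ν t) =
        Complex.exp ((t : ℂ) *
          ∫ x : ℝ, (Complex.exp (Complex.I * (u : ℂ) * (x : ℂ)) - 1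
            - Complex.I * (u : ℂ) * (x : ℂ)) ∂μ))
    (β : ℝ) (hβ : β ∈ Set.Ioo (0 : ℝ) (1 / 2)) :
    ∃ C' > (0 : ℝ), ∃ t₀ ∈ Set.Ioc (0 : ℝ) 1, ∀ t ∈ Set.Ioc (0 : ℝ) t₀,
      ν t {x : ℝ | t ^ β / 2 < |x| ∧ |x| ≤ 2 * t ^ β} ≤
        ENNReal.ofReal (C' * t ^ (1 - α * β)) := by
  obtain ⟨C', hC', hbound⟩ := near_threshold_probability_bound_general μ hμ_mom α C
    (Set.Ioo_subset_Ioc_self hα) hμ_small ν hν_prob hν_char β hβ.2.le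
  exact ⟨C', hC', 1, ⟨one_pos, le_rfl⟩, fun t ht ↦
    (measure_mono fun x hx ↦ hx.1).trans (hbound t ht)⟩
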